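/- Let γ>1, β∈ℝ, v_l, v_r > 0, σ < 0, and suppose states U_l ≠ U_r satisfy the six Rankine–Hugoniot conditions with speed σ, the entropy inequality [G] − σ[η] ≤ 0, and the Lax condition σ² < β²/v_r. Then v_r < v_l and u_{1,r} < u_{1,l}. (Thus for a 3-shock of arbitrary amplitude, [v] < 0 and [u₁] < 0.) -/

import Mathlib

theorem aux_bern (γ t : ℝ) (hγ : 1 < γ) (ht : 0 < t) (ht1 : t < 1) :
    0 < t ^ (-γ) - 1 - γ * (1 - t) := by
  have hlog : Real.log t < t - 1 := Real.log_lt_sub_one_of_pos ht ht1.ne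
  have he : -γ * Real.log t + 1 ≤ Real.exp (Real.log t * (-γ)) := by
    have := Real.add_one_le_exp (Real.log t * (-γ)); linarith
  rw [Real.rpow_def_of_pos ht]
  nlinarith

theorem aux_trap (γ a b : ℝ) (hγ : 1 < γ) (ha : 0 < a) (hab : a < b) :
    0 < (a ^ (-γ) + b ^ (-γ)) / 2 * (b - a) + (b ^ (1 - γ) - a ^ (1 - γ)) / (γ - 1) := by
  let f : ℝ → ℝ := fun x =>
    (a ^ (-γ) + x ^ (-γ)) / 2 * (x - a) + (x ^ (1 - γ) - a ^ (1 - γ)) / (γ - 1)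
  have hd : ∀ x, 0 < x → HasDerivAt f
      ((a ^ (-γ) - x ^ (-γ) - γ * x ^ (-γ - 1) * (x - a)) / 2) x := by
    intro x hx
    have d1 := Real.hasDerivAt_rpow_const (x := x) (p := -γ) (Or.inl hx.ne')
    have d2 := Real.hasDerivAt_rpow_const (x := x) (p := 1 - γ) (Or.inl hx.ne')
    have d3 := (((d1.const_add (a ^ (-γ))).div_const 2).mul
      ((hasDerivAt_id x).sub_const a)).add ((d2.sub_const (a ^ (1 - γ))).div_const (γ - 1))
    refine d3.congr_deriv ?_
    have e : (1 - γ - 1) = -γ := by ring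
    rw [e]
    have : γ - 1 ≠ 0 := by linarith
    simp only [id]
    field_simp
    ring
  have hm : StrictMonoOn f (Set.Icc a b) := by
    apply strictMonoOn_of_deriv_pos (convex_Icc a b)
    · intro x hx
      exact (hd x (lt_of_lt_of_le ha hx.1)).continuousAt.continuousWithinAt
    · intro x hx
      rw [interior_Icc] at hx
      have hx0 : 0 < x := ha.trans hx.1
      rw [(hd x hx0).deriv]
      have hb := aux_bern γ (a / x) hγ (by positivity) ((div_lt_one hx0).2 hx.1)
      rw [Real.div_rpow ha.le hx0.le] at hb
      have hxp : 0 < x ^ (-γ) := Real.rpow_pos_of_pos hx0 _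
      rw [Real.rpow_sub_one hx0.ne']
      have := mul_pos hxp hb
      have e : x ^ (-γ) * (a ^ (-γ) / x ^ (-γ) - 1 - γ * (1 - a / x)) =
          a ^ (-γ) - x ^ (-γ) - γ * (x ^ (-γ) / x) * (x - a) := by
        field_simp
      linarith
  have := hm (Set.left_mem_Icc.2 hab.le) (Set.right_mem_Icc.2 hab.le) hab
  simpa [f] using this

set_option maxHeartbeats 2000000 in
/-- For states `U_l ≠ U_r` satisfying the Rankine–Hugoniot conditions with speed
`σ < 0`, the entropy inequality `[G] − σ[η] ≤ 0`, and the Lax condition `σ² < β²/v_r`, one has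
`v_r < v_l` and `u_{1,r} < u_{1,l}`; i.e. for a 3-shock of arbitrary amplitude `[v] < 0` and
`[u₁] < 0`. -/
theorem mhd_3shock_compression
    (γ β σ vl vr q2l q3l u1l u2l u3l q2r q3r u1r u2r u3r : ℝ)
    (hγ : 1 < γ) (hvl : 0 < vl) (hvr : 0 < vr) (hσ : σ < 0)
    (hne : ¬(vl = vr ∧ q2l = q2r ∧ q3l = q3r ∧ u1l = u1r ∧ u2l = u2r ∧ u3l = u3r))
    (rh1 : -(u1r - u1l) = σ * (vr - vl))
    (rh2 : -(β * (u2r - u2l)) = σ * (q2r - q2l))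
    (rh3 : -(β * (u3r - u3l)) = σ * (q3r - q3l))
    (rh4 : (vr ^ (-γ) - vl ^ (-γ)) +
      ((q2r ^ 2 + q3r ^ 2) / (2 * vr ^ 2) - (q2l ^ 2 + q3l ^ 2) / (2 * vl ^ 2)) =
        σ * (u1r - u1l))
    (rh5 : -(β * (q2r / vr - q2l / vl)) = σ * (u2r - u2l))
    (rh6 : -(β * (q3r / vr - q3l / vl)) = σ * (u3r - u3l))
    (etal etar Gl Gr : ℝ)
    (hetal : etal = vl ^ (1 - γ) / (γ - 1) + (u1l ^ 2 + u2l ^ 2 + u3l ^ 2) / 2 +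
      (q2l ^ 2 + q3l ^ 2) / (2 * vl))
    (hetar : etar = vr ^ (1 - γ) / (γ - 1) + (u1r ^ 2 + u2r ^ 2 + u3r ^ 2) / 2 +
      (q2r ^ 2 + q3r ^ 2) / (2 * vr))
    (hGl : Gl = (vl ^ (-γ) + (q2l ^ 2 + q3l ^ 2) / (2 * vl ^ 2)) * u1l -
      (β / vl) * (q2l * u2l + q3l * u3l))
    (hGr : Gr = (vr ^ (-γ) + (q2r ^ 2 + q3r ^ 2) / (2 * vr ^ 2)) * u1r -
      (β / vr) * (q2r * u2r + q3r * u3r))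
    (hent : (Gr - Gl) - σ * (etar - etal) ≤ 0)
    (hlax : σ ^ 2 < β ^ 2 / vr) :
    vr < vl ∧ u1r < u1l := by
  obtain ⟨b2l, h2l⟩ : ∃ b, b = q2l / vl := ⟨_, rfl⟩
  obtain ⟨b3l, h3l⟩ : ∃ b, b = q3l / vl := ⟨_, rfl⟩
  obtain ⟨b2r, h2r⟩ : ∃ b, b = q2r / vr := ⟨_, rfl⟩
  obtain ⟨b3r, h3r⟩ : ∃ b, b = q3r / vr := ⟨_, rfl⟩
  have k2l : q2l = b2l * vl := by rw [h2l]; field_simp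
  have k3l : q3l = b3l * vl := by rw [h3l]; field_simp
  have k2r : q2r = b2r * vr := by rw [h2r]; field_simp
  have k3r : q3r = b3r * vr := by rw [h3r]; field_simp
  rw [← h2l, ← h2r] at rh5
  rw [← h3l, ← h3r] at rh6
  clear h2l h3l h2r h3r
  subst k2l k3l k2r k3r
  have el1 : ((b2l * vl) ^ 2 + (b3l * vl) ^ 2) / (2 * vl ^ 2) = (b2l ^ 2 + b3l ^ 2) / 2 := by
    field_simp
  have er1 : ((b2r * vr) ^ 2 + (b3r * vr) ^ 2) / (2 * vr ^ 2) = (b2r ^ 2 + b3r ^ 2) / 2 := by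
    field_simp
  have el2 : ((b2l * vl) ^ 2 + (b3l * vl) ^ 2) / (2 * vl) = vl * (b2l ^ 2 + b3l ^ 2) / 2 := by
    field_simp
  have er2 : ((b2r * vr) ^ 2 + (b3r * vr) ^ 2) / (2 * vr) = vr * (b2r ^ 2 + b3r ^ 2) / 2 := by
    field_simp
  have el3 : (β / vl) * (b2l * vl * u2l + b3l * vl * u3l) = β * (b2l * u2l + b3l * u3l) := by
    field_simp
  have er3 : (β / vr) * (b2r * vr * u2r + b3r * vr * u3r) = β * (b2r * u2r + b3r * u3r) := by
    field_simp
  rw [el1, er1] at rh4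
  rw [el2] at hetal
  rw [er2] at hetar
  rw [el1, el3] at hGl
  rw [er1, er3] at hGr
  have hlax' : σ ^ 2 * vr < β ^ 2 := (lt_div_iff₀ hvr).1 hlax
  have hv : vr < vl := by
    rcases lt_trichotomy vr vl with h | h | h
    · exact h
    · exfalso
      subst h
      have hβ : β ≠ 0 := by
        rintro rfl
        nlinarith [mul_nonneg (sq_nonneg σ) hvr.le]
      have hc : β ^ 2 - σ ^ 2 * vr ≠ 0 := by linarith
      have B2 : b2r - b2l = 0 := by
        apply mul_left_cancel₀ hc
        linear_combination σ * rh2 - β * rh5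
      have B3 : b3r - b3l = 0 := by
        apply mul_left_cancel₀ hc
        linear_combination σ * rh3 - β * rh6
      have B2' : b2l = b2r := by linarith
      have B3' : b3l = b3r := by linarith
      subst B2' B3'
      have U2 : u2r - u2l = 0 := by
        apply mul_left_cancel₀ hβ
        linear_combination -rh2
      have U3 : u3r - u3l = 0 := by
        apply mul_left_cancel₀ hβ
        linear_combination -rh3
      exact hne ⟨rfl, rfl, rfl, by linarith, by linarith, by linarith⟩
    · exfalso
      have ht := aux_trap γ vl vr hγ hvl h
      rw [sub_div] at ht
      generalize vl ^ (1 - γ) / (γ - 1) = El at *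
      generalize vr ^ (1 - γ) / (γ - 1) = Er at *
      generalize vl ^ (-γ) = pl at *
      generalize vr ^ (-γ) = pr at *
      have key : (Gr - Gl) - σ * (etar - etal) =
          -σ * (((pl + pr) / 2 * (vr - vl) + (Er - El)) +
            (vr - vl) * ((b2r - b2l) ^ 2 + (b3r - b3l) ^ 2) / 4) := by
        subst hetal hetar hGl hGr
        linear_combination
          (-((pl + (b2l ^ 2 + b3l ^ 2) / 2) + (pr + (b2r ^ 2 + b3r ^ 2) / 2)) / 2) * rh1
          + (u1l + u1r) / 2 * rh4 + (b2l + b2r) / 2 * rh2 + (b3l + b3r) / 2 * rh3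
          + (u2l + u2r) / 2 * rh5 + (u3l + u3r) / 2 * rh6
      have hpos : 0 < -σ * (((pl + pr) / 2 * (vr - vl) + (Er - El)) +
            (vr - vl) * ((b2r - b2l) ^ 2 + (b3r - b3l) ^ 2) / 4) := by
        apply mul_pos (by linarith)
        have : 0 ≤ (vr - vl) * ((b2r - b2l) ^ 2 + (b3r - b3l) ^ 2) / 4 := by
          have : 0 ≤ vr - vl := by linarith
          positivity
        linarith
      linarith
  refine ⟨hv, ?_⟩
  have := mul_pos (neg_pos.2 hσ) (sub_pos.2 hv)
  linarith
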